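/- Let R be a PID and M a finitely generated R-module. Then Ext^1_R(M, R) is isomorphic as an R-module to the torsion submodule of M. -/

import Mathlib

open CategoryTheory

/-- The `R`-module `Ext¹_R(M, N)`. -/
noncomputable def ext1 (R : Type) [CommRing R] (M N : Type)
    [AddCommGroup M] [Module R M] [AddCommGroup N] [Module R N] : ModuleCat R :=
  ((Ext R (ModuleCat R) 1).obj (Opposite.op (ModuleCat.of R M))).obj (ModuleCat.of R N)

section Helpers

variable {R : Type} [CommRing R] {M N P₀ P₁ T : Type}
    [AddCommGroup M] [Module R M] [AddCommGroup N] [Module R N]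
    [AddCommGroup P₀] [Module R P₀] [AddCommGroup P₁] [Module R P₁]
    [AddCommGroup T] [Module R T]

/-- objects of the two term complex -/
noncomputable def twoX (R : Type) [CommRing R] (P₀ P₁ : Type)
    [AddCommGroup P₀] [Module R P₀] [AddCommGroup P₁] [Module R P₁] : ℕ → ModuleCat.{0} R
  | 0 => ModuleCat.of R P₀
  | 1 => ModuleCat.of R P₁
  | _ + 2 => ModuleCat.of R PUnit

/-- differentials of the two term complex -/
noncomputable def twoD (f : P₁ →ₗ[R] P₀) : ∀ n, twoX R P₀ P₁ (n + 1) ⟶ twoX R P₀ P₁ n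
  | 0 => ModuleCat.ofHom f
  | _ + 1 => 0

/-- the two term complex -/
noncomputable def twoC (f : P₁ →ₗ[R] P₀) : ChainComplex (ModuleCat.{0} R) ℕ :=
  ChainComplex.of (twoX R P₀ P₁) (twoD f) (fun n => by
    change (0 : _ ⟶ _) ≫ _ = 0
    simp)

theorem twoC_d (f : P₁ →ₗ[R] P₀) : (twoC f).d 1 0 = ModuleCat.ofHom f :=
  ChainComplex.of_d (twoX R P₀ P₁) (twoD f) 0

theorem twoC_d2 (f : P₁ →ₗ[R] P₀) (n : ℕ) : (twoC f).d (n + 2) (n + 1) = 0 :=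
  ChainComplex.of_d _ _ (n + 1)

theorem twoC_exact (f : P₁ →ₗ[R] P₀) (hf : Function.Injective f) (n : ℕ) :
    (twoC f).ExactAt (n + 1) := by
  rw [HomologicalComplex.exactAt_iff' _ (n + 1 + 1) (n + 1) n (by simp) (by simp)]
  cases n with
  | zero =>
    rw [ShortComplex.exact_iff_mono _ (twoC_d2 f 0)]
    change Mono ((twoC f).d 1 0)
    rw [twoC_d]
    exact (ModuleCat.mono_iff_injective _).2 hf
  | succ n =>
    apply ShortComplex.exact_of_isZero_X₂
    exact ModuleCat.isZero_of_subsingleton (ModuleCat.of R PUnit)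

/-- the augmentation -/
noncomputable def twoπ (f : P₁ →ₗ[R] P₀) (g : P₀ →ₗ[R] M) (hfg : g ∘ₗ f = 0) :
    twoC f ⟶ (ChainComplex.single₀ _).obj (ModuleCat.of R M) :=
  (ChainComplex.toSingle₀Equiv _ _).symm ⟨ModuleCat.ofHom g, by
    rw [twoC_d]
    exact ModuleCat.hom_ext hfg⟩

theorem twoπ_quasi (f : P₁ →ₗ[R] P₀) (g : P₀ →ₗ[R] M) (hf : Function.Injective f)
    (hfg : Function.Exact f g) (hg : Function.Surjective g) :
    QuasiIso (twoπ f g hfg.linearMap_comp_eq_zero) := ⟨fun n => by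
  cases n
  · rw [ChainComplex.quasiIsoAt₀_iff, ShortComplex.quasiIso_iff_of_zeros']
    · constructor
      · rw [ShortComplex.moduleCat_exact_iff]
        intro x hx
        obtain ⟨y, hy⟩ := (hfg x).1 hx
        refine ⟨y, ?_⟩
        change ((twoC f).d 1 0).hom y = x
        rw [twoC_d]
        exact hy
      · exact (ModuleCat.epi_iff_surjective (ModuleCat.ofHom g)).2 hg
    all_goals rfl
  · rw [quasiIsoAt_iff_exactAt']
    · apply twoC_exact f hf
    · apply ChainComplex.exactAt_succ_single_obj⟩

/-- the resolution -/
noncomputable def twoRes [Module.Projective R P₀] [Module.Projective R P₁]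
    (f : P₁ →ₗ[R] P₀) (g : P₀ →ₗ[R] M) (hf : Function.Injective f)
    (hfg : Function.Exact f g) (hg : Function.Surjective g) :
    ProjectiveResolution (ModuleCat.of R M) where
  complex := twoC f
  projective n := by
    match n with
    | 0 => exact ModuleCat.projective_of_categoryTheory_projective (ModuleCat.of R P₀)
    | 1 => exact ModuleCat.projective_of_categoryTheory_projective (ModuleCat.of R P₁)
    | _ + 2 => exact ModuleCat.projective_of_categoryTheory_projective (ModuleCat.of R PUnit)
  π := twoπ f g hfg.linearMap_comp_eq_zero
  quasiIso := twoπ_quasi f g hf hfg hg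

theorem ext1_of_res [Module.Projective R P₀] [Module.Projective R P₁]
    (f : P₁ →ₗ[R] P₀) (g : P₀ →ₗ[R] M) (hf : Function.Injective f)
    (hfg : Function.Exact f g) (hg : Function.Surjective g)
    (s : (P₁ →ₗ[R] N) →ₗ[R] T) (hs : Function.Surjective s)
    (hfs : Function.Exact (fun φ : P₀ →ₗ[R] N => φ ∘ₗ f) s) :
    Nonempty ((((Ext R (ModuleCat R) 1).obj (Opposite.op (ModuleCat.of R M))).obj
      (ModuleCat.of R N)) ≃ₗ[R] T) := by
  let P := twoRes f g hf hfg hg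
  let K := P.complex.linearYonedaObj R (ModuleCat.of R N)
  let S := K.sc' 0 1 2
  have hSg : S.g = 0 := by
    ext φ : 2
    change (twoC f).d 2 1 ≫ _ = _
    rw [twoC_d2]
    exact Limits.zero_comp
  let σ : S.X₂ ⟶ ModuleCat.of R T := ModuleCat.ofHom
    (s ∘ₗ (ModuleCat.homLinearEquiv (S := R)
      (M := ModuleCat.of R P₁) (N := ModuleCat.of R N)).toLinearMap)
  have hσ : Function.Surjective σ.hom :=
    hs.comp (ModuleCat.homLinearEquiv (S := R)
      (M := ModuleCat.of R P₁) (N := ModuleCat.of R N)).surjective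
  have hex : Function.Exact S.f.hom σ.hom := by
    intro φ
    refine (hfs (ModuleCat.Hom.hom (show ModuleCat.of R P₁ ⟶ ModuleCat.of R N from φ))).trans ?_
    constructor
    · rintro ⟨ψ, hψ⟩
      refine ⟨(ModuleCat.ofHom ψ : ModuleCat.of R P₀ ⟶ ModuleCat.of R N), ?_⟩
      change (twoC f).d 1 0 ≫ _ = _
      rw [twoC_d]
      exact ModuleCat.hom_ext hψ
    · rintro ⟨ψ, hψ⟩
      refine ⟨ModuleCat.Hom.hom (show ModuleCat.of R P₀ ⟶ ModuleCat.of R N from ψ), ?_⟩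
      subst hψ
      change _ = ModuleCat.Hom.hom ((twoC f).d 1 0 ≫ (show ModuleCat.of R P₀ ⟶ ModuleCat.of R N from ψ))
      rw [twoC_d]
      rfl
  let hd := ShortComplex.LeftHomologyData.ofIsColimitCokernelCofork S hSg _
    (ModuleCat.isColimitCokernelCofork S.f σ hex hσ)
  exact ⟨(P.isoExt 1 (ModuleCat.of R N) ≪≫ K.homologyIsoSc' 0 1 2 (by simp) (by simp) ≪≫
    hd.homologyIso).toLinearEquiv⟩

end Helpers

/-- Over a PID `R`, for a finitely generated `R`-module `M`, the module `Ext¹_R(M, R)`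
is isomorphic to the torsion submodule of `M`. -/
theorem ext1_iso_torsion
    (R : Type) [CommRing R] [IsDomain R] [IsPrincipalIdealRing R]
    (M : Type) [AddCommGroup M] [Module R M] [Module.Finite R M] :
    Nonempty ((ext1 R M R) ≃ₗ[R] ↥(Submodule.torsion R M)) := by
  classical
  obtain ⟨ι, _, p, hp, e, ⟨h⟩⟩ :=
    Module.equiv_directSum_of_isTorsion (@Submodule.torsion_isTorsion R M _ _ _)
  obtain ⟨n, ⟨b⟩⟩ := @Module.basisOfFiniteTypeTorsionFree' R _ (M ⧸ Submodule.torsion R M) _ _ _ _ _ _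
  obtain ⟨r, hr⟩ := Module.projective_lifting_property _ LinearMap.id
    (Submodule.torsion R M).mkQ_surjective
  let E : (Submodule.torsion R M × (Fin n →₀ R)) ≃ₗ[R] M :=
    ((LinearEquiv.refl R _).prodCongr b.symm).trans
      (lequivProdOfRightSplitExact (Submodule.torsion R M).injective_subtype
        (by rw [Submodule.range_subtype, Submodule.ker_mkQ]) hr)
  let a : ι → R := fun i => p i ^ e i
  have ha : ∀ i, a i ≠ 0 := fun i => pow_ne_zero _ (hp i).ne_zero
  let q : (ι → R) →ₗ[R] Submodule.torsion R M :=
    (h.symm.toLinearMap ∘ₗ (DirectSum.linearEquivFunOnFintype R ι _).symm.toLinearMap) ∘ₗ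
      LinearMap.pi (fun i => (Submodule.mkQ (Submodule.span R {p i ^ e i})) ∘ₗ LinearMap.proj i)
  have hq : Function.Surjective q := by
    refine (h.symm.surjective.comp (DirectSum.linearEquivFunOnFintype R ι _).symm.surjective).comp ?_
    intro y
    choose x hx using fun i => Submodule.mkQ_surjective _ (y i)
    exact ⟨x, funext hx⟩
  have hq0 : ∀ x, q x = 0 ↔ ∃ y : ι → R, a * y = x := by
    intro x
    have : q x = 0 ↔ ∀ i, x i ∈ Submodule.span R {a i} := by
      simp [q, a, funext_iff, Ideal.Quotient.eq_zero_iff_mem]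
    rw [this]
    simp only [Submodule.mem_span_singleton]
    constructor
    · intro H
      choose y hy using H
      exact ⟨y, funext fun i => by simp [← hy i, mul_comm]⟩
    · rintro ⟨y, rfl⟩ i
      exact ⟨y i, by simp [mul_comm]⟩
  let D : (ι → R) →ₗ[R] (ι → R) := LinearMap.mulLeft R a
  let f : (ι → R) →ₗ[R] (ι → R) × (Fin n →₀ R) := LinearMap.inl R _ _ ∘ₗ D
  let g : (ι → R) × (Fin n →₀ R) →ₗ[R] M := E.toLinearMap ∘ₗ q.prodMap LinearMap.id
  let c : ((ι → R) →ₗ[R] R) →ₗ[R] (ι → R) :=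
    LinearMap.pi fun i => LinearMap.applyₗ (Pi.single i 1)
  have hc : Function.Injective c := by
    intro φ ψ H
    refine LinearMap.pi_ext' fun i => LinearMap.ext_ring ?_
    exact congrFun H i
  have hc' : ∀ y, ∃ φ, c φ = y := by
    intro y
    refine ⟨∑ i, y i • LinearMap.proj i, funext fun i => ?_⟩
    simp [c, Pi.single_apply]
  refine ext1_of_res f g ?_ ?_ ?_ (q ∘ₗ c) (hq.comp hc') ?_
  · intro x y H
    have := congrArg Prod.fst H
    funext i
    exact mul_left_cancel₀ (ha i) (congrFun this i)
  · rintro ⟨x, z⟩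
    have : g (x, z) = 0 ↔ q x = 0 ∧ z = 0 := by
      simp [g]
    rw [this, hq0]
    constructor
    · rintro ⟨⟨y, rfl⟩, rfl⟩
      exact ⟨y, rfl⟩
    · rintro ⟨y, H⟩
      exact ⟨⟨y, congrArg Prod.fst H⟩, (congrArg Prod.snd H).symm⟩
  · exact E.surjective.comp (Prod.map_surjective.2 ⟨hq, Function.surjective_id⟩)
  · have key : ∀ ψ : (ι → R) × (Fin n →₀ R) →ₗ[R] R,
        c (ψ ∘ₗ f) = a * c (ψ ∘ₗ LinearMap.inl R _ _) := by
      intro ψ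
      funext i
      have : a * Pi.single i 1 = a i • (Pi.single i 1 : ι → R) := by
        funext j
        by_cases hj : j = i
        · subst hj; simp
        · simp [hj]
      change ψ (LinearMap.inl R _ _ (a * Pi.single i 1)) = _
      rw [this, map_smul, map_smul]
      rfl
    intro φ
    refine (hq0 (c φ)).trans ?_
    constructor
    · rintro ⟨y, hy⟩
      obtain ⟨ψ, rfl⟩ := hc' y
      refine ⟨ψ ∘ₗ LinearMap.fst R _ _, hc ?_⟩
      rw [← hy, key]
      rfl
    · rintro ⟨ψ, rfl⟩
      exact ⟨_, (key ψ).symm⟩
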